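/- arXiv:1401.8126 — 4 statements merged into one kernel-verified Lean document; each statement's English description precedes it below -/
import Mathlib

section
/- Let X be a d × d real symmetric matrix with eigenvalues λ_1 ≥ λ_2 ≥ ... ≥ λ_d and a corresponding orthonormal system of eigenvectors u_1, ..., u_d. Let U_p be the d × p matrix whose columns are u_1, ..., u_p. Then for every d × d real matrix V̂ that is symmetric, idempotent (V̂² = V̂), and has rank p, one has ‖U_p U_pᵀ − X‖_F ≤ ‖V̂ − X‖_F, where ‖·‖_F is the Frobenius norm. In other words, U_p U_pᵀ is a closest point to X in the set P(p,d) of d × d symmetric idempotent rank-p matrices. -/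
/-!
For a symmetric idempotent `P` of trace `p`, expanding the square gives
`‖P - X‖² = p - 2 ∑ i, lam i * w i + tr (X * X)` with weights `w i = u i ⬝ᵥ P *ᵥ u i`
(`trace_sub_sq`), since the trace may be computed in the orthonormal basis `u`.
The weights lie in `[0, 1]` and sum to `tr P = p`, the trace of an idempotent being its rank.
As `lam` is nonincreasing, `∑ i, lam i * w i` is largest when all the mass sits on the first `p`
indices (`sum_weights_le`), and these are exactly the weights of `Up * Upᵀ`.
-/

open Matrix

/-- Frobenius norm of a real matrix. -/
noncomputable def frobNorm {m n : Type*} [Fintype m] [Fintype n]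
    (A : Matrix m n ℝ) : ℝ :=
  Real.sqrt (Matrix.trace (Aᵀ * A))

/-- The trace of a matrix may be computed in any orthonormal basis. -/
lemma trace_eq_sum_orthonormal {d : ℕ} (u : Fin d → Fin d → ℝ)
    (hortho : ∀ i j, u i ⬝ᵥ u j = if i = j then (1 : ℝ) else 0)
    (A : Matrix (Fin d) (Fin d) ℝ) :
    A.trace = ∑ i, u i ⬝ᵥ A *ᵥ u i := by
  have h1 : (Matrix.of u) * (Matrix.of u)ᵀ = 1 := by
    ext i j
    rw [Matrix.one_apply, ← hortho i j]
    rfl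
  have h2 : (Matrix.of u)ᵀ * (Matrix.of u) = 1 := mul_eq_one_comm.mp h1
  calc A.trace = (A * ((Matrix.of u)ᵀ * Matrix.of u)).trace := by rw [h2, mul_one]
    _ = (Matrix.of u * (A * (Matrix.of u)ᵀ)).trace := by
      rw [← Matrix.mul_assoc, Matrix.trace_mul_comm]
    _ = ∑ i, u i ⬝ᵥ A *ᵥ u i := rfl

lemma trace_eq_rank_of_idempotent {d : ℕ} (V : Matrix (Fin d) (Fin d) ℝ) (hV : V * V = V) :
    V.trace = V.rank := by
  have h : IsIdempotentElem (Matrix.toLin' V) := by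
    rw [IsIdempotentElem, Module.End.mul_eq_comp, ← Matrix.toLin'_mul, hV]
  rw [← Matrix.trace_toLin'_eq, (LinearMap.IsIdempotentElem.isProj_range _ h).trace]
  rfl

/-- Squared Frobenius distance from a projection `P` to `X`, in terms of the weights
`u i ⬝ᵥ P *ᵥ u i` of `P` in the eigenbasis of `X`. -/
lemma trace_sub_sq {d : ℕ} (X : Matrix (Fin d) (Fin d) ℝ) (hX : X.IsSymm)
    (lam : Fin d → ℝ) (u : Fin d → Fin d → ℝ)
    (hortho : ∀ i j, u i ⬝ᵥ u j = if i = j then (1 : ℝ) else 0)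
    (heig : ∀ i, X *ᵥ u i = lam i • u i)
    (P : Matrix (Fin d) (Fin d) ℝ) (hP : P.IsSymm) (hPP : P * P = P) :
    ((P - X)ᵀ * (P - X)).trace
      = P.trace - 2 * ∑ i, lam i * (u i ⬝ᵥ P *ᵥ u i) + (X * X).trace := by
  have h : (P * X).trace = ∑ i, lam i * (u i ⬝ᵥ P *ᵥ u i) := by
    rw [trace_eq_sum_orthonormal u hortho]
    refine Finset.sum_congr rfl fun i _ => ?_
    rw [← Matrix.mulVec_mulVec, heig, Matrix.mulVec_smul, dotProduct_smul, smul_eq_mul]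
  rw [Matrix.transpose_sub, hP.eq, hX.eq, Matrix.sub_mul, Matrix.mul_sub, Matrix.mul_sub, hPP,
    Matrix.trace_sub, Matrix.trace_sub, Matrix.trace_sub, Matrix.trace_mul_comm X P, h]
  ring

lemma dotProduct_proj_eq {d : ℕ} (P : Matrix (Fin d) (Fin d) ℝ) (hP : P.IsSymm)
    (hPP : P * P = P) (x : Fin d → ℝ) : x ⬝ᵥ P *ᵥ x = (P *ᵥ x) ⬝ᵥ (P *ᵥ x) := by
  conv_lhs => rw [← hPP, ← Matrix.mulVec_mulVec, Matrix.dotProduct_mulVec,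
    ← Matrix.mulVec_transpose, hP.eq]

lemma dotProduct_proj_nonneg {d : ℕ} (P : Matrix (Fin d) (Fin d) ℝ) (hP : P.IsSymm)
    (hPP : P * P = P) (x : Fin d → ℝ) : 0 ≤ x ⬝ᵥ P *ᵥ x := by
  rw [dotProduct_proj_eq P hP hPP]
  exact Finset.sum_nonneg fun i _ => mul_self_nonneg _

/-- Nonnegativity of the complementary projection `1 - P`. -/
lemma dotProduct_proj_le {d : ℕ} (P : Matrix (Fin d) (Fin d) ℝ) (hP : P.IsSymm)
    (hPP : P * P = P) (x : Fin d → ℝ) : x ⬝ᵥ P *ᵥ x ≤ x ⬝ᵥ x := by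
  have h := dotProduct_proj_nonneg (1 - P) (by
    rw [Matrix.IsSymm, Matrix.transpose_sub, hP.eq, Matrix.transpose_one]) (by
    simp [sub_mul, mul_sub, hPP]) x
  rw [Matrix.sub_mulVec, Matrix.one_mulVec, dotProduct_sub] at h
  linarith

/-- Among weights in `[0, 1]` with total mass `p`, the indicator of the first `p` indices maximizes
the weighted sum of a nonincreasing sequence. -/
lemma sum_weights_le {d p : ℕ} (hpd : p ≤ d) (lam : Fin d → ℝ) (hlam : Antitone lam)
    (w : Fin d → ℝ) (h0 : ∀ i, 0 ≤ w i) (h1 : ∀ i, w i ≤ 1)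
    (hsum : ∑ i, w i = ∑ i : Fin d, if (i : ℕ) < p then (1 : ℝ) else 0) :
    ∑ i, lam i * w i ≤ ∑ i : Fin d, lam i * if (i : ℕ) < p then (1 : ℝ) else 0 := by
  -- a threshold separating the first `p` values from the others
  obtain ⟨c, hc1, hc2⟩ : ∃ c : ℝ, (∀ i : Fin d, (i : ℕ) < p → c ≤ lam i) ∧
      (∀ i : Fin d, p ≤ (i : ℕ) → lam i ≤ c) := by
    rcases hpd.lt_or_eq with h | rfl
    · exact ⟨lam ⟨p, h⟩, fun i hi => hlam (Fin.mk_le_mk.mpr hi.le : i ≤ ⟨p, h⟩),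
        fun i hi => hlam (Fin.mk_le_mk.mpr hi : (⟨p, h⟩ : Fin d) ≤ i)⟩
    · rcases p with _ | n
      · exact ⟨0, fun i => i.elim0, fun i => i.elim0⟩
      · exact ⟨lam (Fin.last n), fun i _ => hlam (Fin.le_last i),
          fun i hi => absurd i.isLt (not_lt.mpr hi)⟩
  have key : ∑ i, (lam i - c) * w i
      ≤ ∑ i : Fin d, (lam i - c) * if (i : ℕ) < p then (1 : ℝ) else 0 := by
    refine Finset.sum_le_sum fun i _ => ?_
    split_ifs with hi
    · nlinarith [hc1 i hi, h1 i]
    · nlinarith [hc2 i (not_lt.mp hi), h0 i]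
  simp only [sub_mul, Finset.sum_sub_distrib, ← Finset.mul_sum] at key
  rw [hsum] at key
  linarith

/-- If `X` is a `d × d` real symmetric matrix with eigenvalues
`λ 1 ≥ ... ≥ λ d` and orthonormal eigenvectors `u 1, ..., u d`, and `Up` is the
`d × p` matrix whose columns are `u 1, ..., u p`, then `Up * Upᵀ` is a closest
point to `X` among all symmetric idempotent rank-`p` matrices, in Frobenius norm. -/
theorem closest_projection_matrix (d p : ℕ) (hpd : p ≤ d)
    (X : Matrix (Fin d) (Fin d) ℝ) (hX : X.IsSymm)
    (lam : Fin d → ℝ) (hlam : Antitone lam)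
    (u : Fin d → Fin d → ℝ)
    (hortho : ∀ i j, u i ⬝ᵥ u j = if i = j then (1 : ℝ) else 0)
    (heig : ∀ i, X.mulVec (u i) = lam i • u i)
    (Up : Matrix (Fin d) (Fin p) ℝ)
    (hUp : Up = Matrix.of fun i j => u (Fin.castLE hpd j) i) :
    ∀ V : Matrix (Fin d) (Fin d) ℝ,
      V.IsSymm → V * V = V → V.rank = p →
      frobNorm (Up * Upᵀ - X) ≤ frobNorm (V - X) := by
  intro V hV hVV hrank
  have hUU : Upᵀ * Up = 1 := by
    ext i j
    have := hortho (Fin.castLE hpd i) (Fin.castLE hpd j)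
    simp only [(Fin.castLE_injective hpd).eq_iff] at this
    rw [Matrix.one_apply, ← this, hUp]
    rfl
  have hPs : (Up * Upᵀ).IsSymm := by
    rw [Matrix.IsSymm, Matrix.transpose_mul, Matrix.transpose_transpose]
  have hPP : (Up * Upᵀ) * (Up * Upᵀ) = Up * Upᵀ := by
    rw [Matrix.mul_assoc, ← Matrix.mul_assoc Upᵀ, hUU, Matrix.one_mul]
  have hPtr : (Up * Upᵀ).trace = p := by
    rw [Matrix.trace_mul_comm, hUU, Matrix.trace_one, Fintype.card_fin]
  have hVtr : V.trace = p := by rw [trace_eq_rank_of_idempotent V hVV, hrank]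
  have hw : ∀ i, u i ⬝ᵥ (Up * Upᵀ) *ᵥ u i = if (i : ℕ) < p then (1 : ℝ) else 0 := by
    intro i
    have hcoord : ∀ j, (Upᵀ *ᵥ u i) j = if Fin.castLE hpd j = i then 1 else 0 := by
      intro j
      rw [← hortho, hUp]
      rfl
    rw [← Matrix.mulVec_mulVec, Matrix.dotProduct_mulVec, ← Matrix.mulVec_transpose, dotProduct]
    simp only [hcoord]
    split_ifs with hi
    · rw [Finset.sum_eq_single ⟨i, hi⟩]
      · simp
      · intro j _ hj
        have : Fin.castLE hpd j ≠ i := fun h => hj (by ext; simp [← h])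
        simp [this]
      · simp
    · refine Finset.sum_eq_zero fun j _ => ?_
      have : Fin.castLE hpd j ≠ i := fun h => hi (by rw [← h]; exact j.isLt)
      simp [this]
  have hmain := sum_weights_le hpd lam hlam (fun i => u i ⬝ᵥ V *ᵥ u i)
    (fun i => dotProduct_proj_nonneg V hV hVV _)
    (fun i => (dotProduct_proj_le V hV hVV _).trans_eq (by simp [hortho])) (by
      simp only [← hw]
      rw [← trace_eq_sum_orthonormal u hortho, ← trace_eq_sum_orthonormal u hortho, hVtr, hPtr])
  unfold frobNorm
  apply Real.sqrt_le_sqrt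
  rw [trace_sub_sq X hX lam u hortho heig _ hPs hPP, trace_sub_sq X hX lam u hortho heig V hV hVV,
    hPtr, hVtr]
  simp only [hw]
  linarith
end

section
/- (Poincaré separation inequality.) Let X be a d × d real symmetric matrix with eigenvalues λ_1 ≥ λ_2 ≥ ... ≥ λ_d, and let W be a d × p real matrix with orthonormal columns (WᵀW = I_p). Let μ_1 ≥ μ_2 ≥ ... ≥ μ_p be the eigenvalues of the p × p symmetric matrix Wᵀ X W. Then μ_k ≤ λ_k for every k with 1 ≤ k ≤ p. -/
/-!
Stack the eigenvectors as rows of orthogonal matrices `U` (from `u`) and `A` (from `a`), so that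
`X = Uᵀ diag(λ) U` and `A (Wᵀ X W) Aᵀ = diag(μ)`. The matrix `Q = U W Aᵀ` then has orthonormal
columns and satisfies `Qᵀ diag(λ) Q = diag(μ)`. A dimension count gives a nonzero `c` supported on
the indices `≤ k` such that `Q c` vanishes at the indices `< k`
(`exists_ne_zero_supported_le`). Evaluating the quadratic form at `c`,
`μ_k |c|² ≤ ∑ μ_i c_i² = ∑ λ_j (Q c)_j² ≤ λ_k |Q c|² = λ_k |c|²`, and `|c|² > 0`.
-/

open Matrix

/-- The `k` equations `(Q c)_j = 0` for `j < k` together with the `p - k - 1` equations `c_i = 0`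
for `i > k` (indices starting at `0`) have a nonzero common solution. They are the rows of a square
matrix whose row `k` is zero. -/
lemma exists_ne_zero_supported_le {d p : ℕ} (hpd : p ≤ d) (Q : Matrix (Fin d) (Fin p) ℝ)
    (k : Fin p) :
    ∃ c : Fin p → ℝ, c ≠ 0 ∧ (∀ i, k < i → c i = 0) ∧
      ∀ j, j < Fin.castLE hpd k → (Q *ᵥ c) j = 0 := by
  let N : Matrix (Fin p) (Fin p) ℝ := Matrix.of fun i =>
    if k < i then (1 : Matrix (Fin p) (Fin p) ℝ) i
    else if i < k then Q (Fin.castLE hpd i) else 0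
  have hdet : N.det = 0 := by
    apply Matrix.det_eq_zero_of_row_eq_zero k
    intro j
    simp [N]
  obtain ⟨c, hc, hN⟩ := Matrix.exists_mulVec_eq_zero_iff.mpr hdet
  refine ⟨c, hc, fun i hi => ?_, fun j hj => ?_⟩
  · have h := congrFun hN i
    have hrow : N i = (1 : Matrix (Fin p) (Fin p) ℝ) i := if_pos hi
    have h' : ((1 : Matrix (Fin p) (Fin p) ℝ) *ᵥ c) i = 0 := by
      simpa only [Matrix.mulVec, hrow, Pi.zero_apply] using h
    simpa using h'
  · have hjk : j.val < k.val := hj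
    let i : Fin p := ⟨j.val, hjk.trans k.isLt⟩
    have hi : i < k := hjk
    have h := congrFun hN i
    have hrow : N i = Q j := (if_neg hi.not_gt).trans (if_pos hi)
    simpa only [Matrix.mulVec, hrow, Pi.zero_apply] using h

/-- The separation inequality in diagonal form. -/
lemma separation_of_diagonal {d p : ℕ} (hpd : p ≤ d) (Q : Matrix (Fin d) (Fin p) ℝ)
    (hQ : Qᵀ * Q = 1) {lam : Fin d → ℝ} (hlam : Antitone lam) {mu : Fin p → ℝ}
    (hmu : Antitone mu) (hD : Qᵀ * diagonal lam * Q = diagonal mu) (k : Fin p) :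
    mu k ≤ lam (Fin.castLE hpd k) := by
  obtain ⟨c, hc, hsupp, hker⟩ := exists_ne_zero_supported_le hpd Q k
  have hpos : 0 < c ⬝ᵥ c := by
    have h0 : 0 ≤ c ⬝ᵥ c := Finset.sum_nonneg fun i _ => mul_self_nonneg (c i)
    exact lt_of_le_of_ne h0 fun h => hc (dotProduct_self_eq_zero.mp h.symm)
  have hnorm : (Q *ᵥ c) ⬝ᵥ (Q *ᵥ c) = c ⬝ᵥ c := by
    rw [dotProduct_mulVec, vecMul_mulVec, ← dotProduct_mulVec, hQ, one_mulVec]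
  have hform : (Q *ᵥ c) ⬝ᵥ (diagonal lam *ᵥ (Q *ᵥ c)) = c ⬝ᵥ (diagonal mu *ᵥ c) := by
    rw [← hD, ← mulVec_mulVec, ← mulVec_mulVec, dotProduct_mulVec c, vecMul_transpose]
  have hlow : mu k * (c ⬝ᵥ c) ≤ c ⬝ᵥ (diagonal mu *ᵥ c) := by
    simp only [dotProduct, mulVec_diagonal, Finset.mul_sum]
    refine Finset.sum_le_sum fun i _ => ?_
    rcases lt_or_ge k i with h | h
    · simp [hsupp i h]
    · nlinarith [mul_le_mul_of_nonneg_right (hmu h) (mul_self_nonneg (c i))]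
  have hup : (Q *ᵥ c) ⬝ᵥ (diagonal lam *ᵥ (Q *ᵥ c)) ≤
      lam (Fin.castLE hpd k) * ((Q *ᵥ c) ⬝ᵥ (Q *ᵥ c)) := by
    generalize Q *ᵥ c = z at hker
    simp only [dotProduct, mulVec_diagonal, Finset.mul_sum]
    refine Finset.sum_le_sum fun j _ => ?_
    rcases lt_or_ge j (Fin.castLE hpd k) with h | h
    · simp [hker j h]
    · nlinarith [mul_le_mul_of_nonneg_right (hlam h) (mul_self_nonneg (z j))]
  rw [hform, hnorm] at hup
  exact le_of_mul_le_mul_right (hlow.trans hup) hpos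

lemma mul_transpose_of_orthonormal {n : ℕ} {v : Fin n → Fin n → ℝ}
    (hv : ∀ i j, v i ⬝ᵥ v j = if i = j then (1 : ℝ) else 0) :
    Matrix.of v * (Matrix.of v)ᵀ = 1 := by
  ext i j
  rw [Matrix.one_apply, ← hv i j]
  rfl

lemma mul_transpose_of_eigenvectors {n : ℕ} {M : Matrix (Fin n) (Fin n) ℝ}
    {v : Fin n → Fin n → ℝ} {ev : Fin n → ℝ} (hv : ∀ i, M *ᵥ v i = ev i • v i) :
    M * (Matrix.of v)ᵀ = (Matrix.of v)ᵀ * diagonal ev := by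
  ext i j
  rw [mul_diagonal]
  have h := congrFun (hv j) i
  rw [Pi.smul_apply, smul_eq_mul, mul_comm] at h
  exact h

/-- Poincaré separation inequality: if `X` is `d × d` real
symmetric with eigenvalues `λ 1 ≥ ... ≥ λ d` (orthonormal eigenvectors `u`),
`W` is a `d × p` matrix with orthonormal columns, and `μ 1 ≥ ... ≥ μ p` are
the eigenvalues of `Wᵀ X W` (orthonormal eigenvectors `a`), then `μ k ≤ λ k`
for all `k ≤ p`. -/
theorem poincare_separation (d p : ℕ) (hpd : p ≤ d)
    (X : Matrix (Fin d) (Fin d) ℝ) (hX : X.IsSymm)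
    (lam : Fin d → ℝ) (hlam : Antitone lam)
    (u : Fin d → Fin d → ℝ)
    (hortho : ∀ i j, u i ⬝ᵥ u j = if i = j then (1 : ℝ) else 0)
    (heig : ∀ i, X.mulVec (u i) = lam i • u i)
    (W : Matrix (Fin d) (Fin p) ℝ) (hW : Wᵀ * W = 1)
    (mu : Fin p → ℝ) (hmu : Antitone mu)
    (a : Fin p → Fin p → ℝ)
    (haortho : ∀ i j, a i ⬝ᵥ a j = if i = j then (1 : ℝ) else 0)
    (haeig : ∀ i, (Wᵀ * X * W).mulVec (a i) = mu i • a i) :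
    ∀ k : Fin p, mu k ≤ lam (Fin.castLE hpd k) := by
  have hU := mul_transpose_of_orthonormal hortho
  have hA := mul_transpose_of_orthonormal haortho
  have hXU := mul_transpose_of_eigenvectors heig
  have hYA := mul_transpose_of_eigenvectors haeig
  set U := Matrix.of u
  set A := Matrix.of a
  have hU' : Uᵀ * U = 1 := mul_eq_one_comm.mp hU
  have hXdec : Uᵀ * diagonal lam * U = X := by
    rw [← hXU, Matrix.mul_assoc, hU', Matrix.mul_one]
  refine separation_of_diagonal hpd (U * W * Aᵀ) ?_ hlam hmu ?_
  · calc (U * W * Aᵀ)ᵀ * (U * W * Aᵀ) = A * (Wᵀ * (Uᵀ * U) * W) * Aᵀ := by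
          simp only [transpose_mul, transpose_transpose, Matrix.mul_assoc]
      _ = 1 := by rw [hU', Matrix.mul_one, hW, Matrix.mul_one, hA]
  · calc (U * W * Aᵀ)ᵀ * diagonal lam * (U * W * Aᵀ)
        = A * (Wᵀ * (Uᵀ * diagonal lam * U) * W * Aᵀ) := by
          simp only [transpose_mul, transpose_transpose, Matrix.mul_assoc]
      _ = diagonal mu := by rw [hXdec, hYA, ← Matrix.mul_assoc, hA, Matrix.one_mul]
end

section
/- (Ky Fan–type trace inequality.) Let X be a d × d real symmetric matrix with eigenvalues λ_1 ≥ λ_2 ≥ ... ≥ λ_d. Then for every d × p real matrix W with orthonormal columns (WᵀW = I_p), Tr(Wᵀ X W) ≤ ∑_{i=1}^{p} λ_i. -/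
open Matrix

/-!
Let `U` be the orthogonal matrix whose rows are the eigenvectors, so that `X = Uᵀ D U` with
`D = diagonal lam`, and put `V = U W`, which again has orthonormal columns. Then
`Tr(Wᵀ X W) = Tr(Vᵀ D V) = ∑ i, lam i * c i`, where `c i` is the `i`-th diagonal entry of the
orthogonal projection `V Vᵀ`. These weights lie in `[0, 1]` (`diag_proj_le_one`) and sum to `p`,
and for a decreasing sequence such a weighted sum is largest when all the weight sits on the
first `p` indices (`weighted_sum_le`).
-/

/-- Any threshold `t` separating the first `p` values of `lam` from the others gives the
termwise bound `(lam i - t) * c i ≤ (lam i - t) * [i < p]`; summing, the `t` terms cancel because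
both families of weights have total `p`. -/
lemma weighted_sum_le (p k : ℕ) (lam c : Fin (p + k) → ℝ) (hlam : Antitone lam)
    (h0 : ∀ i, 0 ≤ c i) (h1 : ∀ i, c i ≤ 1) (hs : ∑ i, c i = p) :
    ∑ i, lam i * c i ≤ ∑ i : Fin p, lam (Fin.castAdd k i) := by
  obtain ⟨t, ht1, ht2⟩ : ∃ t : ℝ, (∀ i : Fin p, t ≤ lam (Fin.castAdd k i)) ∧
      ∀ j : Fin k, lam (Fin.natAdd p j) ≤ t := by
    cases p with
    | zero =>
      -- With no leading index, any upper bound of `lam` serves as threshold.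
      refine ⟨∑ i, |lam i|, fun i => i.elim0, fun j => (le_abs_self _).trans ?_⟩
      exact Finset.single_le_sum (f := fun i => |lam i|) (fun i _ => abs_nonneg _)
        (Finset.mem_univ _)
    | succ q =>
      refine ⟨lam (Fin.castAdd k (Fin.last q)), fun i => hlam ?_, fun j => hlam ?_⟩
      · rw [Fin.le_def]; simp; omega
      · rw [Fin.le_def]; simp; omega
  rw [Fin.sum_univ_add] at hs ⊢
  have a1 : ∑ i : Fin p, (lam (Fin.castAdd k i) - t) * c (Fin.castAdd k i)
      ≤ ∑ i : Fin p, (lam (Fin.castAdd k i) - t) :=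
    Finset.sum_le_sum fun i _ => mul_le_of_le_one_right (sub_nonneg.2 (ht1 i)) (h1 _)
  have a2 : ∑ j : Fin k, (lam (Fin.natAdd p j) - t) * c (Fin.natAdd p j) ≤ 0 :=
    Finset.sum_nonpos fun j _ => mul_nonpos_of_nonpos_of_nonneg (sub_nonpos.2 (ht2 j)) (h0 _)
  simp only [sub_mul, Finset.sum_sub_distrib, ← Finset.mul_sum, Finset.sum_const,
    Finset.card_univ, Fintype.card_fin, nsmul_eq_mul] at a1 a2
  have a3 := congrArg (t * ·) hs
  simp only [mul_add] at a3
  linarith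

/-- `P = V Vᵀ` is symmetric and idempotent, so `P i i = ∑ k, (P i k) ^ 2 ≥ (P i i) ^ 2`. -/
lemma diag_proj_le_one {d p : ℕ} (V : Matrix (Fin d) (Fin p) ℝ) (hV : Vᵀ * V = 1) (i : Fin d) :
    (V * Vᵀ) i i ≤ 1 := by
  have hP : (V * Vᵀ) * (V * Vᵀ)ᵀ = V * Vᵀ := by
    rw [transpose_mul, transpose_transpose, Matrix.mul_assoc, ← Matrix.mul_assoc Vᵀ, hV,
      Matrix.one_mul]
  set P := V * Vᵀ
  have h := congrFun (congrFun hP i) i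
  rw [Matrix.mul_apply] at h
  have h2 : P i i * P i i ≤ ∑ k, P i k * Pᵀ k i :=
    Finset.single_le_sum (f := fun k => P i k * Pᵀ k i)
      (fun k _ => mul_self_nonneg (P i k)) (Finset.mem_univ i)
  nlinarith

/-- Ky Fan–type trace inequality: if `X` is `d × d` real
symmetric with eigenvalues `λ 1 ≥ ... ≥ λ d` (orthonormal eigenvectors `u`),
then for every `d × p` matrix `W` with orthonormal columns,
`Tr(Wᵀ X W) ≤ ∑_{i=1}^p λ i`. -/
theorem ky_fan_trace_inequality (d p : ℕ) (hpd : p ≤ d)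
    (X : Matrix (Fin d) (Fin d) ℝ) (hX : X.IsSymm)
    (lam : Fin d → ℝ) (hlam : Antitone lam)
    (u : Fin d → Fin d → ℝ)
    (hortho : ∀ i j, u i ⬝ᵥ u j = if i = j then (1 : ℝ) else 0)
    (heig : ∀ i, X.mulVec (u i) = lam i • u i) :
    ∀ W : Matrix (Fin d) (Fin p) ℝ, Wᵀ * W = 1 →
      Matrix.trace (Wᵀ * X * W) ≤ ∑ i : Fin p, lam (Fin.castLE hpd i) := by
  intro W hW
  set U : Matrix (Fin d) (Fin d) ℝ := Matrix.of u with hU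
  have hUU : U * Uᵀ = 1 := by
    ext i j
    rw [Matrix.one_apply, ← hortho i j]
    rfl
  have hUU' : Uᵀ * U = 1 := mul_eq_one_comm.1 hUU
  have hXU : X * Uᵀ = Uᵀ * diagonal lam := by
    ext i j
    rw [Matrix.mul_diagonal]
    have h := congrFun (heig j) i
    rw [Pi.smul_apply, smul_eq_mul, mul_comm] at h
    exact h
  have hXd : X = Uᵀ * diagonal lam * U := by
    rw [← hXU, Matrix.mul_assoc, hUU', Matrix.mul_one]
  have hV : (U * W)ᵀ * (U * W) = 1 := by
    rw [transpose_mul, Matrix.mul_assoc, ← Matrix.mul_assoc Uᵀ, hUU', Matrix.one_mul, hW]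
  have htr : trace (Wᵀ * X * W) = trace (diagonal lam * ((U * W) * (U * W)ᵀ)) := by
    rw [← Matrix.mul_assoc, Matrix.trace_mul_comm _ (U * W)ᵀ, hXd, transpose_mul]
    simp only [Matrix.mul_assoc]
  rw [htr]
  set V := U * W
  have hs : ∑ i, (V * Vᵀ) i i = p := by
    have h : trace (V * Vᵀ) = p := by
      rw [Matrix.trace_mul_comm, hV, Matrix.trace_one, Fintype.card_fin]
    exact h
  have h0 : ∀ i, 0 ≤ (V * Vᵀ) i i := fun i => by
    rw [Matrix.mul_apply]
    exact Finset.sum_nonneg fun k _ => mul_self_nonneg (V i k)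
  have h1 := diag_proj_le_one V hV
  have ht : trace (diagonal lam * (V * Vᵀ)) = ∑ i, lam i * (V * Vᵀ) i i := by
    simp only [Matrix.trace, Matrix.diag_apply, Matrix.diagonal_mul]
  rw [ht]
  obtain ⟨k, rfl⟩ := Nat.exists_eq_add_of_le hpd
  exact weighted_sum_le p k lam (fun i => (V * Vᵀ) i i) hlam h0 h1 hs
end

section
/- (Dictionary atom update.) Let X̂_1, ..., X̂_m and D̂_j (for j ≠ r, with 1 ≤ j ≤ N) be d × d real symmetric matrices, and let y_{i,j} ∈ ℝ for 1 ≤ i ≤ m, 1 ≤ j ≤ N. Define S_r = ∑_{i=1}^m y_{i,r} ( X̂_i − ∑_{j ≠ r} y_{i,j} D̂_j ). Then for any two elements D̂, D̂' of P(p,d) (the set of d × d symmetric idempotent rank-p matrices), ∑_{i=1}^m ‖ X̂_i − ∑_{j ≠ r} y_{i,j} D̂_j − y_{i,r} D̂ ‖_F² ≤ ∑_{i=1}^m ‖ X̂_i − ∑_{j ≠ r} y_{i,j} D̂_j − y_{i,r} D̂' ‖_F² if and only if ‖S_r − D̂‖_F ≤ ‖S_r − D̂'‖_F. Hence a matrix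 in P(p,d) minimizes the total coding cost in the r-th atom if and only if it is a closest point of P(p,d) to S_r under the Frobenius norm. -/
/-!
For `D` in `P(p,d)` one has `‖D‖_F² = Tr D = p`, because the trace of an idempotent is its rank.
Expanding the squares, with `A i` the residual without the `r`-th atom,
`∑ i, ‖A i - y i r • D‖_F² = ∑ i, ‖A i‖_F² - 2 Tr (S_rᵀ D) + (∑ i, (y i r)²) p` and
`‖S_r - D‖_F² = ‖S_r‖_F² - 2 Tr (S_rᵀ D) + p`. Only `Tr (S_rᵀ D)` depends on `D`, and it enters
both expressions with the same coefficient, so both order `P(p,d)` in the same way.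
-/

open Matrix

/-- Membership in `P(p,d)`: `d × d` real symmetric idempotent rank-`p`
matrices. -/
def IsProjMat (d p : ℕ) (V : Matrix (Fin d) (Fin d) ℝ) : Prop :=
  V.IsSymm ∧ V * V = V ∧ V.rank = p

lemma frobNorm_nonneg {d : ℕ} (A : Matrix (Fin d) (Fin d) ℝ) : 0 ≤ frobNorm A :=
  Real.sqrt_nonneg _

lemma frobNorm_sq {d : ℕ} (A : Matrix (Fin d) (Fin d) ℝ) :
    frobNorm A ^ 2 = trace (Aᵀ * A) := by
  refine Real.sq_sqrt ?_
  have h := (Matrix.posSemidef_conjTranspose_mul_self A).trace_nonneg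
  rwa [conjTranspose_eq_transpose_of_trivial] at h

lemma trace_transpose_mul_self_of_isProjMat {d p : ℕ} {D : Matrix (Fin d) (Fin d) ℝ}
    (hD : IsProjMat d p D) : trace (Dᵀ * D) = p := by
  obtain ⟨hs, hi, hr⟩ := hD
  have hidem : IsIdempotentElem (Matrix.toLin' D) := by
    rw [IsIdempotentElem, Module.End.mul_eq_comp, ← Matrix.toLin'_mul, hi]
  have h := (LinearMap.isProj_range_iff_isIdempotentElem _).2 hidem
  have ht := LinearMap.IsProj.trace h
  rw [Matrix.trace_toLin'_eq] at ht
  rw [hs.eq, hi, ht, ← hr]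
  rfl

lemma frobNorm_sub_smul_sq {d p : ℕ} {D : Matrix (Fin d) (Fin d) ℝ} (hD : IsProjMat d p D)
    (A : Matrix (Fin d) (Fin d) ℝ) (c : ℝ) :
    frobNorm (A - c • D) ^ 2 = trace (Aᵀ * A) - 2 * trace ((c • A)ᵀ * D) + c ^ 2 * p := by
  have hsymm : trace (Dᵀ * A) = trace (Aᵀ * D) := by
    rw [← trace_transpose, transpose_mul, transpose_transpose]
  rw [frobNorm_sq, ← trace_transpose_mul_self_of_isProjMat hD]
  simp only [transpose_sub, transpose_smul, sub_mul, mul_sub, smul_mul, Matrix.mul_smul,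
    trace_sub, trace_smul, smul_eq_mul, hsymm]
  ring

/-- The total coding cost depends on `D` only through `Tr (Sᵀ D)`, where `S = ∑ i, c i • A i`. -/
lemma sum_frobNorm_sub_smul_sq {d p m : ℕ} {D : Matrix (Fin d) (Fin d) ℝ}
    (hD : IsProjMat d p D) (A : Fin m → Matrix (Fin d) (Fin d) ℝ) (c : Fin m → ℝ) :
    ∑ i, frobNorm (A i - c i • D) ^ 2 =
      ∑ i, trace ((A i)ᵀ * A i) - 2 * trace ((∑ i, c i • A i)ᵀ * D) + (∑ i, c i ^ 2) * p := by
  rw [transpose_sum, Matrix.sum_mul, trace_sum]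
  simp only [frobNorm_sub_smul_sq hD, Finset.sum_add_distrib, Finset.sum_sub_distrib,
    ← Finset.mul_sum, ← Finset.sum_mul]

/-- dictionary atom update: with
`S_r = ∑ i, y i r • (X̂ i - ∑_{j ≠ r} y i j • D̂ j)`, for any two elements
`D̂, D̂'` of `P(p,d)` the total coding cost in the `r`-th atom satisfies
`cost(D̂) ≤ cost(D̂')` iff `‖S_r - D̂‖_F ≤ ‖S_r - D̂'‖_F`. -/
theorem dictionary_atom_update (d p m N : ℕ) (r : Fin N)
    (Xh : Fin m → Matrix (Fin d) (Fin d) ℝ) (hXh : ∀ i, (Xh i).IsSymm)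
    (Dh : Fin N → Matrix (Fin d) (Fin d) ℝ) (hDh : ∀ j, (Dh j).IsSymm)
    (y : Fin m → Fin N → ℝ)
    (Sr : Matrix (Fin d) (Fin d) ℝ)
    (hSr : Sr = ∑ i, y i r •
        (Xh i - ∑ j ∈ Finset.univ.erase r, y i j • Dh j))
    (D D' : Matrix (Fin d) (Fin d) ℝ)
    (hD : IsProjMat d p D) (hD' : IsProjMat d p D') :
    (∑ i, frobNorm (Xh i - (∑ j ∈ Finset.univ.erase r, y i j • Dh j)
          - y i r • D) ^ 2 ≤
      ∑ i, frobNorm (Xh i - (∑ j ∈ Finset.univ.erase r, y i j • Dh j)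
          - y i r • D') ^ 2) ↔
    frobNorm (Sr - D) ≤ frobNorm (Sr - D') := by
  have h1 := frobNorm_sub_smul_sq hD Sr 1
  have h2 := frobNorm_sub_smul_sq hD' Sr 1
  rw [one_smul, one_smul] at h1 h2
  rw [sum_frobNorm_sub_smul_sq hD, sum_frobNorm_sub_smul_sq hD', ← hSr,
    ← sq_le_sq₀ (frobNorm_nonneg (Sr - D)) (frobNorm_nonneg (Sr - D')), h1, h2]
  constructor <;> intro h <;> linarith
end
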